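/- Let p be a prime and let (R, m) be a Noetherian local ℤ_(p)-algebra with p ∈ m, such that p is a nonzerodivisor on R and R/pR is F-finite. Let R̂ denote the m-adic completion of R. Then for every integer n ≥ 1, R is n-quasi-F-split if and only if R̂ is n-quasi-F-split; in particular sht(R) = sht(R̂). -/

import Mathlib

/-!
Write `R̄ = R/p`, `T` for the `m`-adic completion of `R`, `W` for the `p`-typical Witt vectors.
A splitting of `Φ_{R,n}` is the same as an additive map `τ : W(R) → R̄` that kills
`Fil_n = ker (W → W_n)`, satisfies `τ([a^p] x) = a τ(x)` and has `τ(1) = 1`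
(`isNQuasiFSplit_iff`). Both directions use a dévissage of `W(R)` along the filtration `Fil_i`,
whose graded pieces are represented by the elements `V^i[b]`, and the identity
`[a] V^i[b] = V^i[a^(p^i) b]`.

Ascent (`isNQuasiFSplit_completion`). The dévissage shows that `τ` is continuous: for every `k`
there is `M` with `τ(W(m^M)) ⊆ m^k R̄` (`exists_ker_map_le`). Approximating Witt vectors over `T` by
Witt vectors over `R`, one extends `τ` to a map from `W(T)` to the completion of `R̄`. As `R̄` is a
finite module over the Noetherian ring `R`, this completion is `T ⊗ R̄`, which maps to `T/p`.

Descent (`isNQuasiFSplit_of_completion`). Because `R̄` is `F`-finite, the same dévissage shows that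
`Q_{R,n}` is a finite `R̄`-module (`phiQ_finite`), hence finitely presented. A splitting over `T`
restricts to an `R̄`-linear map from `Q_{R,n}` to the flat `R̄`-module `R̄ ⊗ T`, so it factors
through a finite free `R̄`-module. The image of `1` in that free module must have a unit coordinate,
since otherwise `1` would become zero in the residue field; this coordinate, rescaled, splits
`Φ_{R,n}`.
-/

/-- `S` is `n`-quasi-`F`-split: the ring homomorphism
`Φ_{S,n} : S̄ → Q_{S,n} = W_n(S)/pW_n(S)`, `a mod p ↦ [a^p] mod p`, admits an
`S̄`-linear left inverse (where `Q_{S,n}` is an `S̄`-module via `Φ_{S,n}`).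
Equivalently (composing with the surjection `W_n(S) → W_n(S)/pW_n(S)`; additive maps
to the characteristic-`p` ring `S̄` automatically kill `pW_n(S)`): there is an additive
map `σ : W_n(S) → S̄` which is `S̄`-semilinear for the `Φ`-action and satisfies
`σ([a^p]) = a mod p` for all `a : S`. -/
def IsNQuasiFSplit (p : ℕ) [Fact p.Prime] (S : Type*) [CommRing S] (n : ℕ) : Prop :=
  ∃ σ : TruncatedWittVector p n S → S ⧸ Ideal.span {(p : S)},
    (∀ x y : TruncatedWittVector p n S, σ (x + y) = σ x + σ y) ∧
    (∀ (a : S) (x : TruncatedWittVector p n S),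
      σ (WittVector.truncate n (WittVector.teichmuller p (a ^ p)) * x)
        = Ideal.Quotient.mk _ a * σ x) ∧
    (∀ a : S,
      σ (WittVector.truncate n (WittVector.teichmuller p (a ^ p)))
        = Ideal.Quotient.mk _ a)

/-- The quasi-`F`-splitting height `sht(S) ∈ ℕ ∪ {∞}`. -/
noncomputable def sht (p : ℕ) [Fact p.Prime] (S : Type*) [CommRing S] : ℕ∞ :=
  sInf {k : ℕ∞ | ∃ n : ℕ, k = (n : ℕ∞) ∧ 1 ≤ n ∧ IsNQuasiFSplit p S n}


/-! ### Dévissage of Witt vectors -/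

section Dev
open WittVector
variable {p : ℕ} [hp : Fact p.Prime] {R : Type*} [CommRing R]

/-- `F[r] = [r^p]` over an arbitrary commutative ring, by reduction to the universal case of
polynomial rings over `ℤ`, where the ghost map over `ℚ` decides equality. -/
lemma frobenius_teichmuller_aux (r : R) :
    frobenius (teichmuller p r) = teichmuller p (r ^ p) := by
  have h1 : ∀ x : MvPolynomial R ℚ, frobenius (teichmuller p x) = teichmuller p (x ^ p) := by
    intro x
    apply (ghostMap.bijective_of_invertible p (MvPolynomial R ℚ)).1
    ext1 n
    simp only [ghostMap_apply, ghostComponent_frobenius, ghostComponent_teichmuller]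
    rw [← pow_mul, pow_succ']
  have h2 : ∀ x : MvPolynomial R ℤ, frobenius (teichmuller p x) = teichmuller p (x ^ p) := by
    intro x
    refine map_injective (MvPolynomial.map (Int.castRingHom ℚ))
      (MvPolynomial.map_injective _ Int.cast_injective) ?_
    rw [(frobenius_isPoly p).map]
    simp only [map_teichmuller, h1, map_pow]
  obtain ⟨x, rfl⟩ := MvPolynomial.counit_surjective R r
  rw [← map_pow, ← map_teichmuller, ← map_teichmuller, ← (frobenius_isPoly p).map, h2]

/-- The Witt vector `V^i[b]`, whose only nonzero coefficient is `b` in degree `i`. -/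
noncomputable def vTeich (p : ℕ) [Fact p.Prime] {R : Type*} [CommRing R] (i : ℕ) (b : R) :
    WittVector p R := verschiebung^[i] (teichmuller p b)

lemma teichmuller_mul_vTeich (i : ℕ) (a b : R) :
    teichmuller p a * vTeich p i b = vTeich p i (a ^ p ^ i * b) := by
  have h : ∀ (i : ℕ) (a : R), frobenius^[i] (teichmuller p a) = teichmuller p (a ^ p ^ i) := by
    intro i
    induction i with
    | zero => simp
    | succ k ih =>
      intro a
      rw [Function.iterate_succ_apply, frobenius_teichmuller_aux, ih, ← pow_mul, pow_succ']
  rw [vTeich, mul_comm, iterate_verschiebung_mul_left, h, ← map_mul, mul_comm, vTeich]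

lemma sub_coeff_zero_aux (x y : WittVector p R) :
    (x - y).coeff 0 = x.coeff 0 - y.coeff 0 :=
  map_sub (constantCoeff : WittVector p R →+* R) x y

/-- If `y ∈ W(J)` has vanishing zeroth coefficient, then `V^i y ∈ Fil_{i+1} ∩ W(J)`. Here
`Fil_i` is the kernel of truncation to length `i`, and `W(J)`, the Witt vectors with all coefficients
in `J`, is the kernel of `W(R) → W(R/J)`. -/
lemma iterate_verschiebung_mem {J : Ideal R} (i : ℕ) {y : WittVector p R}
    (h0 : y.coeff 0 = 0) (hy : y ∈ RingHom.ker (WittVector.map (Ideal.Quotient.mk J))) :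
    verschiebung^[i] y ∈ RingHom.ker (truncate (p := p) (R := R) (i + 1)) ∧
    verschiebung^[i] y ∈ RingHom.ker (WittVector.map (p := p) (Ideal.Quotient.mk J)) := by
  constructor
  · rw [mem_ker_truncate]
    intro k hk
    rcases Nat.lt_succ_iff_lt_or_eq.mp hk with h | rfl
    · exact iterate_verschiebung_coeff_eq_zero _ h
    · simpa [h0] using iterate_verschiebung_coeff y k 0
  · induction i with
    | zero => exact hy
    | succ k ih =>
      rw [Function.iterate_succ_apply', RingHom.mem_ker, map_verschiebung, RingHom.mem_ker.mp ih,
        map_zero]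

lemma teichmuller_mem_ker {J : Ideal R} {b : R} (hb : b ∈ J) :
    teichmuller p b ∈ RingHom.ker (WittVector.map (p := p) (Ideal.Quotient.mk J)) := by
  rw [RingHom.mem_ker, map_teichmuller, Ideal.Quotient.eq_zero_iff_mem.mpr hb, teichmuller_zero]

lemma mem_ker_map_iff {J : Ideal R} {x : WittVector p R} :
    x ∈ RingHom.ker (WittVector.map (p := p) (Ideal.Quotient.mk J)) ↔ ∀ k, x.coeff k ∈ J := by
  rw [RingHom.mem_ker, WittVector.ext_iff]
  simp [map_coeff, Ideal.Quotient.eq_zero_iff_mem]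

/-- On `J`, the map `b ↦ V^i[b]` is additive modulo `Fil_{i+1} ∩ W(J)`. -/
lemma vTeich_add (i : ℕ) {J : Ideal R} {b c : R} (hb : b ∈ J) (hc : c ∈ J) :
    vTeich p i (b + c) - vTeich p i b - vTeich p i c ∈
      RingHom.ker (truncate (p := p) (R := R) (i + 1)) ∧
    vTeich p i (b + c) - vTeich p i b - vTeich p i c ∈
      RingHom.ker (WittVector.map (p := p) (Ideal.Quotient.mk J)) := by
  have := iterate_verschiebung_mem (J := J) i
    (y := teichmuller p (b + c) - teichmuller p b - teichmuller p c)
    (by simp [sub_coeff_zero_aux])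
    (sub_mem (sub_mem (teichmuller_mem_ker (add_mem hb hc)) (teichmuller_mem_ker hb))
      (teichmuller_mem_ker hc))
  simpa only [vTeich, iterate_map_sub] using this

/-- An element of `Fil_i ∩ W(J)` is congruent to `V^i` of the Teichmüller lift of its `i`-th
coefficient, modulo `Fil_{i+1} ∩ W(J)`. -/
lemma sub_vTeich_mem (i : ℕ) {J : Ideal R} {x : WittVector p R}
    (h1 : x ∈ RingHom.ker (truncate (p := p) (R := R) i))
    (h2 : x ∈ RingHom.ker (WittVector.map (p := p) (Ideal.Quotient.mk J))) :
    x - vTeich p i (x.coeff i) ∈ RingHom.ker (truncate (p := p) (R := R) (i + 1)) ∧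
    x - vTeich p i (x.coeff i) ∈ RingHom.ker (WittVector.map (p := p) (Ideal.Quotient.mk J)) := by
  have hx := eq_iterate_verschiebung ((mem_ker_truncate i x).mp h1)
  have h0 : (x.shift i).coeff 0 = x.coeff i := by simp [shift_coeff]
  have := iterate_verschiebung_mem (J := J) i (y := x.shift i - teichmuller p (x.coeff i))
    (by simp [sub_coeff_zero_aux, h0])
    (sub_mem (mem_ker_map_iff.mpr fun k => by
        rw [shift_coeff]; exact mem_ker_map_iff.mp h2 _)
      (teichmuller_mem_ker (mem_ker_map_iff.mp h2 _)))
  rw [iterate_map_sub, ← hx] at this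
  exact this

/-- The trace of `N` on the `i`-th graded piece of `W(J)`: the additive group of all `b ∈ J` with
`V^i[b] ∈ N`. It is a group because `N` contains `Fil_{i+1} ∩ W(J)`. -/
def grSub (N : AddSubgroup (WittVector p R)) (i : ℕ) (J : Ideal R)
    (hN : ∀ x ∈ RingHom.ker (truncate (p := p) (R := R) (i + 1)),
      x ∈ RingHom.ker (WittVector.map (p := p) (Ideal.Quotient.mk J)) → x ∈ N) :
    AddSubgroup R where
  carrier := {b | b ∈ J ∧ vTeich p i b ∈ N}
  zero_mem' := ⟨J.zero_mem, by simp [vTeich, iterate_map_zero]⟩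
  add_mem' := by
    rintro b c ⟨hb, hb'⟩ ⟨hc, hc'⟩
    refine ⟨J.add_mem hb hc, ?_⟩
    have := vTeich_add (p := p) i hb hc
    have := N.add_mem (N.add_mem (hN _ this.1 this.2) hc') hb'
    simpa using this
  neg_mem' := by
    rintro b ⟨hb, hb'⟩
    refine ⟨J.neg_mem hb, ?_⟩
    have := vTeich_add (p := p) i hb (J.neg_mem hb)
    have h := N.add_mem (hN _ this.1 this.2) hb'
    rw [add_neg_cancel] at h
    have h0 : vTeich p i (0 : R) = 0 := by simp [vTeich, iterate_map_zero]
    rw [h0] at h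
    have := N.neg_mem h
    simpa using this

/-- The dévissage step: once `N ⊇ Fil_{i+1} ∩ W(J)`, membership in `N` of an element of
`Fil_i ∩ W(J)` is decided by its `i`-th coefficient. -/
lemma mem_of_grSub (N : AddSubgroup (WittVector p R)) (i : ℕ) (J : Ideal R)
    (hN : ∀ x ∈ RingHom.ker (truncate (p := p) (R := R) (i + 1)),
      x ∈ RingHom.ker (WittVector.map (p := p) (Ideal.Quotient.mk J)) → x ∈ N)
    {x : WittVector p R} (h1 : x ∈ RingHom.ker (truncate (p := p) (R := R) i))
    (h2 : x ∈ RingHom.ker (WittVector.map (p := p) (Ideal.Quotient.mk J)))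
    (hx : x.coeff i ∈ grSub N i J hN) : x ∈ N := by
  have h := sub_vTeich_mem i h1 h2
  have := N.add_mem (hN _ h.1 h.2) hx.2
  simpa using this

/-- Continuity: an additive subgroup `N` of `W(R)` that contains `Fil_n` and all `[a^p] x` with
`a ∈ m^k` contains `W(m^M)` for some `M`. The proof is a descending induction on `i` for
`Fil_i ∩ W(m^M)`. -/
lemma exists_ker_map_le {m : Ideal R} (hm : m.FG) (n k : ℕ) (N : AddSubgroup (WittVector p R))
    (hn : ∀ x ∈ RingHom.ker (truncate (p := p) (R := R) n), x ∈ N)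
    (hk : ∀ a ∈ m ^ k, ∀ x, teichmuller p (a ^ p) * x ∈ N) :
    ∃ M, ∀ x : WittVector p R,
      x ∈ RingHom.ker (WittVector.map (p := p) (Ideal.Quotient.mk (m ^ M))) → x ∈ N := by
  suffices H : ∀ j i, i + j = n → ∃ M, ∀ x ∈ RingHom.ker (truncate (p := p) (R := R) i),
      x ∈ RingHom.ker (WittVector.map (p := p) (Ideal.Quotient.mk (m ^ M))) → x ∈ N by
    obtain ⟨M, hM⟩ := H n 0 (zero_add n)
    exact ⟨M, fun x hx => hM x ((mem_ker_truncate 0 x).mpr (by simp)) hx⟩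
  intro j
  induction j with
  | zero => rintro i rfl; exact ⟨0, fun x hx _ => hn x hx⟩
  | succ j ih =>
    intro i hi
    obtain ⟨M, hM⟩ := ih (i + 1) (by omega)
    -- `[a^p] V^i[r] = V^i[a^(p^(i+1)) r]`, so the graded piece of `N` contains the ideal `I`
    -- generated by the `p^(i+1)`-th powers from `m^K`, and `I` contains a power of `m`.
    let K := max k M
    let I : Ideal R := Ideal.span ((fun a => a ^ p ^ (i + 1)) '' (m ^ K : Ideal R))
    have hI : m ≤ I.radical := by
      intro a ha
      refine ⟨K * p ^ (i + 1), ?_⟩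
      rw [pow_mul]
      exact Ideal.subset_span ⟨a ^ K, Ideal.pow_mem_pow ha K, rfl⟩
    obtain ⟨L, hL⟩ := Ideal.exists_pow_le_of_le_radical_of_fg hI hm
    have hIB : ∀ b ∈ I, b ∈ grSub N i (m ^ M) hM := by
      intro b hb
      induction hb using Submodule.closure_induction with
      | zero => exact zero_mem _
      | add x y _ _ hx hy => exact add_mem hx hy
      | smul_mem r x hx =>
        obtain ⟨a, ha, rfl⟩ := hx
        have haK : a ∈ m ^ K := ha
        refine ⟨Ideal.mul_mem_left _ _ (Ideal.pow_mem_of_mem _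
          (Ideal.pow_le_pow_right (le_max_right _ _) haK) _ (pow_pos hp.out.pos _)), ?_⟩
        have := hk a (Ideal.pow_le_pow_right (le_max_left _ _) haK) (vTeich p i r)
        rw [teichmuller_mul_vTeich, ← pow_mul, ← pow_succ', mul_comm] at this
        exact this
    refine ⟨max L M, fun x h1 h2 => ?_⟩
    have h2' := mem_ker_map_iff.mp h2
    refine mem_of_grSub N i (m ^ M) hM h1 (mem_ker_map_iff.mpr fun l =>
      Ideal.pow_le_pow_right (le_max_right _ _) (h2' l)) (hIB _ (hL
        (Ideal.pow_le_pow_right (le_max_left _ _) (h2' i))))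

/-- Finiteness of a ring homomorphism in terms of additive subgroups, which is the form the
dévissage needs. -/
lemma exists_finite_of_ringHom_finite {A B : Type*} [CommRing A] [CommRing B] {f : A →+* B}
    (hf : f.Finite) : ∃ s : Set B, s.Finite ∧ ∀ C : AddSubgroup B,
      (∀ a, ∀ b ∈ s, f a * b ∈ C) → C = ⊤ := by
  let := f.toAlgebra
  have h : Module.Finite A B := hf
  obtain ⟨s, hs⟩ := h.fg_top
  refine ⟨s, s.finite_toSet, fun C hC => eq_top_iff.mpr fun b _ => ?_⟩
  have hb : b ∈ Submodule.span A (s : Set B) := hs ▸ trivial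
  induction hb using Submodule.closure_induction with
  | zero => exact zero_mem _
  | add x y _ _ hx hy => exact add_mem (hx trivial) (hy trivial)
  | smul_mem r x hx => exact hC r x hx

/-- If `R/p` is `F`-finite, then `W(R)/(Fil_n + p)` is finitely generated for the action of `a`
through `[a^p]`: the generators are the `V^i[b]` with `i < n` and `b` in a finite set lifting
generators of `R/p` over its `(i+1)`-st Frobenius. -/
lemma exists_finite_generators
    (F : R ⧸ Ideal.span {(p : R)} →+* R ⧸ Ideal.span {(p : R)})
    (hF : ∀ x : R ⧸ Ideal.span {(p : R)}, F x = x ^ p) (hFfin : F.Finite) (n : ℕ) :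
    ∃ G : Set (WittVector p R), G.Finite ∧ ∀ N : AddSubgroup (WittVector p R),
      (∀ x ∈ RingHom.ker (truncate (p := p) (R := R) n), x ∈ N) →
      (∀ x, (p : WittVector p R) * x ∈ N) →
      (∀ a, ∀ x ∈ N, teichmuller p (a ^ p) * x ∈ N) → G ⊆ N → N = ⊤ := by
  have hpow : ∀ i : ℕ, ∀ x, (F ^ i) x = x ^ p ^ i := by
    intro i
    induction i with
    | zero => intro x; simp
    | succ k ih =>
      intro x
      rw [pow_succ', RingHom.mul_def, RingHom.comp_apply, ih, hF, ← pow_mul, pow_succ]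
  have hfin : ∀ i : ℕ, (F ^ i).Finite := by
    intro i
    induction i with
    | zero => exact RingHom.Finite.id _
    | succ k ih => rw [pow_succ']; exact RingHom.Finite.comp hFfin ih
  have hgen : ∀ i : ℕ, ∃ s : Set R, s.Finite ∧ ∀ B : AddSubgroup R, (∀ r, (p : R) * r ∈ B) →
      (∀ a, ∀ b ∈ s, a ^ p ^ i * b ∈ B) → B = ⊤ := by
    intro i
    obtain ⟨s, hs, hs'⟩ := exists_finite_of_ringHom_finite (hfin i)
    refine ⟨Quotient.out '' s, hs.image _, fun B hB h => ?_⟩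
    have hker : ∀ r ∈ Ideal.span {(p : R)}, r ∈ B := by
      intro r hr
      obtain ⟨c, rfl⟩ := Ideal.mem_span_singleton.mp hr
      exact hB c
    have := hs' (B.map (Ideal.Quotient.mk (Ideal.span {(p : R)})).toAddMonoidHom) (by
      intro a b hb
      obtain ⟨a, rfl⟩ := Ideal.Quotient.mk_surjective a
      refine ⟨a ^ p ^ i * b.out, h a _ ⟨b, hb, rfl⟩, ?_⟩
      rw [hpow]
      change Ideal.Quotient.mk _ _ = _
      have hb' : Ideal.Quotient.mk (Ideal.span {(p : R)}) b.out = b := Quotient.out_eq b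
      rw [map_mul, map_pow, hb'])
    rw [eq_top_iff]
    intro r _
    obtain ⟨r', hr', hrr⟩ : Ideal.Quotient.mk (Ideal.span {(p : R)}) r ∈
      B.map (Ideal.Quotient.mk (Ideal.span {(p : R)})).toAddMonoidHom := this ▸ trivial
    have := hker _ (Ideal.Quotient.eq.mp hrr.symm)
    simpa using B.add_mem this hr'
  choose s hs hs' using hgen
  refine ⟨⋃ i ∈ Finset.range n, vTeich p i '' s (i + 1), ?_, ?_⟩
  · exact Set.Finite.biUnion (Finset.finite_toSet _) fun i _ => (hs _).image _
  intro N hn hpN hact hG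
  suffices H : ∀ j i, i + j = n → ∀ x ∈ RingHom.ker (truncate (p := p) (R := R) i), x ∈ N by
    rw [eq_top_iff]
    exact fun x _ => H n 0 (zero_add n) x ((mem_ker_truncate 0 x).mpr (by simp))
  intro j
  induction j with
  | zero => rintro i rfl; exact hn
  | succ j ih =>
    intro i hi x hx
    have ih' := ih (i + 1) (by omega)
    have hB : grSub N i ⊤ (fun x hx _ => ih' x hx) = ⊤ := by
      refine hs' (i + 1) _ ?_ ?_
      -- `V^i[p r]` agrees with `p V^i[r]` modulo `Fil_{i+1}`.
      · intro r
        refine ⟨trivial, ?_⟩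
        have h := (iterate_verschiebung_mem (J := (⊤ : Ideal R)) i
          (y := p • teichmuller p r - teichmuller p ((p : R) * r))
          (by rw [sub_coeff_zero_aux]
              have : (p • teichmuller p r).coeff 0 = p • (teichmuller p r).coeff 0 :=
                map_nsmul (constantCoeff : WittVector p R →+* R) p _
              rw [this, teichmuller_coeff_zero, teichmuller_coeff_zero, nsmul_eq_mul, sub_self])
          (mem_ker_map_iff.mpr fun _ => trivial)).1
        rw [iterate_map_sub, iterate_map_nsmul] at h
        have h' := N.sub_mem (hpN (vTeich p i r)) (ih' _ h)
        simpa [vTeich, nsmul_eq_mul] using h'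
      · intro a b hb
        refine ⟨trivial, ?_⟩
        rw [pow_succ', pow_mul, ← teichmuller_mul_vTeich]
        refine hact _ _ (hG ?_)
        simp only [Set.mem_iUnion, Finset.mem_range]
        exact ⟨i, by omega, b, hb, rfl⟩
    exact mem_of_grSub N i ⊤ (fun x hx _ => ih' x hx) hx
      (mem_ker_map_iff.mpr fun _ => trivial) (hB ▸ trivial)

end Dev

/-! ### Splittings on `W(S)` and the module `Q_{S,n}` -/

section Split
open WittVector
variable {p : ℕ} [hp : Fact p.Prime]

/-- Splittings of `Φ_{S,n}` as additive maps on the untruncated ring `W(S)`. -/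
lemma isNQuasiFSplit_iff {S : Type*} [CommRing S] {n : ℕ} :
    IsNQuasiFSplit p S n ↔ ∃ τ : WittVector p S →+ S ⧸ Ideal.span {(p : S)},
      (∀ x ∈ RingHom.ker (truncate (p := p) (R := S) n), τ x = 0) ∧
      (∀ a x, τ (teichmuller p (a ^ p) * x) = Ideal.Quotient.mk _ a * τ x) ∧ τ 1 = 1 := by
  constructor
  · rintro ⟨σ, h1, h2, h3⟩
    let σ' : TruncatedWittVector p n S →+ S ⧸ Ideal.span {(p : S)} := AddMonoidHom.mk' σ h1
    refine ⟨σ'.comp (truncate n).toAddMonoidHom, ?_, ?_, ?_⟩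
    · intro x hx
      change σ' (truncate n x) = 0
      rw [RingHom.mem_ker.mp hx, map_zero]
    · intro a x
      change σ (truncate n (teichmuller p (a ^ p) * x)) =
        Ideal.Quotient.mk _ a * σ (truncate n x)
      rw [map_mul, h2]
    · change σ (truncate n 1) = 1
      simpa using h3 1
  · rintro ⟨τ, h1, h2, h3⟩
    have key : ∀ x y : WittVector p S, truncate n x = truncate n y → τ x = τ y := by
      intro x y h
      rw [← sub_eq_zero, ← map_sub]
      exact h1 _ (by rw [RingHom.mem_ker, map_sub, h, sub_self])
    have hout : ∀ x : TruncatedWittVector p n S, truncate n x.out = x :=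
      fun x => TruncatedWittVector.truncateFun_out x
    refine ⟨fun x => τ x.out, fun x y => ?_, fun a x => ?_, fun a => ?_⟩
    · rw [← map_add]
      exact key _ _ (by simp only [map_add, hout])
    · rw [← h2]
      exact key _ _ (by simp only [map_mul, hout])
    · have := h2 a 1
      rw [h3, mul_one, mul_one] at this
      rw [← this]
      exact key _ _ (by simp only [hout])

/-- Since `FV = p`, Frobenius maps `V W(S)` into `p W(S)`. -/
lemma frobenius_mem_span {S : Type*} [CommRing S] {x : WittVector p S} (hx : x.coeff 0 = 0) :
    frobenius x ∈ Ideal.span {(p : WittVector p S)} := by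
  rw [eq_iterate_verschiebung (n := 1) (x := x) (by simpa using hx), Function.iterate_one,
    frobenius_verschiebung]
  exact Ideal.mul_mem_left _ _ (Ideal.mem_span_singleton_self _)

/-- The ring `Q_{S,n} = W_n(S)/p`, encoded as `W(S)/(Fil_n + p)`. -/
abbrev QWitt (p : ℕ) [Fact p.Prime] (n : ℕ) (S : Type*) [CommRing S] : Type _ :=
  WittVector p S ⧸ (RingHom.ker (truncate (p := p) (R := S) n) ⊔ Ideal.span {(p : WittVector p S)})

/-- The ring homomorphism `S → Q_{S,n}`, `a ↦ [a^p]`. It is additive because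
`[a^p] = F[a]` and `[a + b] - [a] - [b]` lies in `V W(S)`. -/
noncomputable def phiAux (p : ℕ) [hp : Fact p.Prime] (n : ℕ) (S : Type*) [CommRing S] :
    S →+* QWitt p n S where
  toFun a := Ideal.Quotient.mk _ (teichmuller p (a ^ p))
  map_one' := by simp
  map_mul' a b := by rw [mul_pow, map_mul, map_mul]
  map_zero' := by rw [zero_pow hp.out.ne_zero, teichmuller_zero, map_zero]
  map_add' a b := by
    rw [← map_add, Ideal.Quotient.eq]
    refine Ideal.mem_sup_right ?_
    simp only [← frobenius_teichmuller_aux, ← map_add, ← map_sub]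
    refine frobenius_mem_span ?_
    rw [sub_coeff_zero_aux]
    have : (teichmuller p a + teichmuller p b).coeff 0 = a + b :=
      map_add (constantCoeff : WittVector p S →+* S) _ _
    rw [this, teichmuller_coeff_zero, sub_self]

/-- The ring homomorphism `Φ_{S,n} : S/p → Q_{S,n}`. The map from `S` kills `p` because
`[p^p] = F[p]` and `[p] - p` lies in `V W(S)`. -/
noncomputable def phiQ (p : ℕ) [hp : Fact p.Prime] (n : ℕ) (S : Type*) [CommRing S] :
    S ⧸ Ideal.span {(p : S)} →+* QWitt p n S :=
  Ideal.Quotient.lift _ (phiAux p n S) (by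
    intro a ha
    refine (Ideal.span_singleton_le_iff_mem (I := RingHom.ker (phiAux p n S))).mpr ?_ ha
    change Ideal.Quotient.mk _ (teichmuller p ((p : S) ^ p)) = 0
    refine Ideal.Quotient.eq_zero_iff_mem.mpr (Ideal.mem_sup_right ?_)
    rw [← frobenius_teichmuller_aux]
    have h : frobenius (teichmuller p (p : S) - (p : WittVector p S)) ∈
        Ideal.span {(p : WittVector p S)} := by
      refine frobenius_mem_span ?_
      rw [sub_coeff_zero_aux]
      have : (p : WittVector p S).coeff 0 = (p : S) :=
        map_natCast (constantCoeff : WittVector p S →+* S) p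
      rw [this, teichmuller_coeff_zero, sub_self]
    rw [map_sub, map_natCast (frobenius : WittVector p S →+* _)] at h
    have h' := Ideal.add_mem _ h (Ideal.mem_span_singleton_self _)
    rwa [sub_add_cancel] at h')

lemma phiQ_mk {n : ℕ} {S : Type*} [CommRing S] (a : S) :
    phiQ p n S (Ideal.Quotient.mk _ a) = Ideal.Quotient.mk _ (teichmuller p (a ^ p)) := rfl

lemma phiQ_finite {R : Type*} [CommRing R]
    (F : R ⧸ Ideal.span {(p : R)} →+* R ⧸ Ideal.span {(p : R)})
    (hF : ∀ x : R ⧸ Ideal.span {(p : R)}, F x = x ^ p) (hFfin : F.Finite) (n : ℕ) :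
    (phiQ p n R).Finite := by
  obtain ⟨G, hG, h⟩ := exists_finite_generators F hF hFfin n
  let := (phiQ p n R).toAlgebra
  let mk : WittVector p R →+* QWitt p n R := Ideal.Quotient.mk _
  let N := Submodule.span (R ⧸ Ideal.span {(p : R)}) (mk '' G)
  have hN := h (N.toAddSubgroup.comap mk.toAddMonoidHom) (fun x hx => by
      change mk x ∈ N
      rw [show mk x = 0 from Ideal.Quotient.eq_zero_iff_mem.mpr (Ideal.mem_sup_left hx)]
      exact N.zero_mem) (fun x => by
      change mk (p * x) ∈ N
      rw [show mk (p * x) = 0 from Ideal.Quotient.eq_zero_iff_mem.mpr (Ideal.mem_sup_right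
        (Ideal.mul_mem_right _ _ (Ideal.mem_span_singleton_self _)))]
      exact N.zero_mem) (fun a x hx => by
      change mk (_ * x) ∈ N
      rw [map_mul]
      exact N.smul_mem (Ideal.Quotient.mk _ a) (show mk x ∈ N from hx))
      (fun x hx => Submodule.subset_span ⟨x, hx, rfl⟩)
  refine Module.Finite.of_fg_top ?_
  have : N = ⊤ := by
    rw [eq_top_iff]
    intro y _
    obtain ⟨x, rfl⟩ := Ideal.Quotient.mk_surjective y
    have : x ∈ N.toAddSubgroup.comap mk.toAddMonoidHom := hN ▸ trivial
    exact this
  rw [← this]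
  exact Submodule.fg_span (hG.image _)

/-! ### Descent from the completion -/

open scoped TensorProduct in
lemma isNQuasiFSplit_of_completion {R : Type*} [CommRing R] [IsNoetherianRing R] [IsLocalRing R]
    (hpm : (p : R) ∈ IsLocalRing.maximalIdeal R) (n : ℕ) (hfin : (phiQ p n R).Finite)
    (h : IsNQuasiFSplit p (AdicCompletion (IsLocalRing.maximalIdeal R) R) n) :
    IsNQuasiFSplit p R n := by
  obtain ⟨τ, h1, h2, h3⟩ := isNQuasiFSplit_iff.mp h
  let m := IsLocalRing.maximalIdeal R
  let T := AdicCompletion m R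
  let A := R ⧸ Ideal.span {(p : R)}
  let B := A ⊗[R] T
  let K := R ⧸ m
  have hpA : (p : A) = 0 := by
    rw [← map_natCast (Ideal.Quotient.mk (Ideal.span {(p : R)})) p]
    exact Ideal.Quotient.eq_zero_iff_mem.mpr (Ideal.mem_span_singleton_self _)
  have hpB : (p : B) = 0 := by
    rw [← map_natCast (algebraMap A B) p, hpA, map_zero]
  let e : T ⧸ Ideal.span {(p : T)} →+* B :=
    Ideal.Quotient.lift _ (Algebra.TensorProduct.includeRight : T →ₐ[R] B).toRingHom (by
      intro a ha
      obtain ⟨c, rfl⟩ := Ideal.mem_span_singleton.mp ha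
      rw [map_mul, map_natCast, hpB, zero_mul])
  have he : ∀ r : R, e (Ideal.Quotient.mk _ (algebraMap R T r)) =
      algebraMap A B (Ideal.Quotient.mk _ r) := by
    intro r
    change (Algebra.TensorProduct.includeRight : T →ₐ[R] B) (algebraMap R T r) = _
    rw [AlgHom.commutes]
    exact IsScalarTower.algebraMap_apply R A B r
  -- Reduction to the residue field, used to detect units.
  let ρ : B →ₐ[R] K := Algebra.TensorProduct.lift
    (Ideal.Quotient.liftₐ (Ideal.span {(p : R)}) (Algebra.ofId R K) (by
      intro a ha
      obtain ⟨c, rfl⟩ := Ideal.mem_span_singleton.mp ha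
      rw [map_mul]
      have : Algebra.ofId R K (p : R) = 0 := Ideal.Quotient.eq_zero_iff_mem.mpr hpm
      rw [this, zero_mul]))
    (AdicCompletion.evalOneₐ m) (fun _ _ => Commute.all _ _)
  let f : WittVector p R →+ B :=
    e.toAddMonoidHom.comp (τ.comp (WittVector.map (algebraMap R T)).toAddMonoidHom)
  have hf : ∀ x, f x = e (τ (WittVector.map (algebraMap R T) x)) := fun _ => rfl
  have hfmul : ∀ a x, f (teichmuller p (a ^ p) * x) =
      algebraMap A B (Ideal.Quotient.mk _ a) * f x := by
    intro a x
    rw [hf, hf, map_mul, map_teichmuller, map_pow, h2, map_mul, he]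
  have hf0 : ∀ x ∈ (RingHom.ker (truncate (p := p) (R := R) n) ⊔
      Ideal.span {(p : WittVector p R)}), f x = 0 := by
    intro x hx
    obtain ⟨y, hy, z, hz, rfl⟩ := Submodule.mem_sup.mp hx
    obtain ⟨c, rfl⟩ := Ideal.mem_span_singleton.mp hz
    rw [map_add, ← nsmul_eq_mul, map_nsmul, nsmul_eq_mul, hpB, zero_mul, add_zero, hf, h1, map_zero]
    rw [mem_ker_truncate] at hy ⊢
    intro i hi
    rw [map_coeff, hy i hi, map_zero]
  let := (phiQ p n R).toAlgebra
  have : Module.Finite A (QWitt p n R) := hfin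
  have : Module.FinitePresentation A (QWitt p n R) := Module.finitePresentation_of_finite A _
  have hout : ∀ x, f (Quotient.out (Ideal.Quotient.mk _ x : QWitt p n R)) = f x := by
    intro x
    rw [← sub_eq_zero, ← map_sub]
    refine hf0 _ (Ideal.Quotient.eq.mp ?_)
    exact Quotient.out_eq _
  let g : QWitt p n R →ₗ[A] B :=
    { toFun := fun q => f q.out
      map_add' := by
        intro x y
        obtain ⟨x, rfl⟩ := Ideal.Quotient.mk_surjective x
        obtain ⟨y, rfl⟩ := Ideal.Quotient.mk_surjective y
        rw [← map_add, hout, hout, hout, map_add]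
      map_smul' := by
        intro a x
        obtain ⟨a, rfl⟩ := Ideal.Quotient.mk_surjective a
        obtain ⟨x, rfl⟩ := Ideal.Quotient.mk_surjective x
        rw [Algebra.smul_def, RingHom.algebraMap_toAlgebra, phiQ_mk, ← map_mul, hout, hout, hfmul]
        exact (Algebra.smul_def (R := A) (A := B) _ _).symm }
  -- `B` is flat over `A` by base change from the flat `R`-algebra `T`.
  obtain ⟨k, u, v, huv⟩ := Module.Flat.exists_factorization_of_finitePresentation g
  let y := u 1
  have hy : ρ (v y) = 1 := by
    have : v y = g 1 := by rw [huv]; rfl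
    rw [this]
    change ρ (f (Quotient.out (Ideal.Quotient.mk _ 1))) = 1
    rw [hout, hf, map_one, h3, map_one, map_one]
  obtain ⟨i, hi⟩ : ∃ i, IsUnit (y i) := by
    by_contra! hcon
    have hz : ∀ i b, ρ (y i • b) = 0 := by
      intro i b
      obtain ⟨r, hr⟩ := Ideal.Quotient.mk_surjective (y i)
      have hrm : r ∈ m := by
        by_contra hrm
        have : IsUnit r := by simpa [m] using hrm
        exact hcon i (hr ▸ this.map _)
      have h' : y i • b = algebraMap R B r * b := by
        rw [← hr, IsScalarTower.algebraMap_apply R A B]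
        exact Algebra.smul_def (R := A) (A := B) _ b
      rw [h', map_mul, AlgHom.commutes]
      have : algebraMap R K r = 0 := Ideal.Quotient.eq_zero_iff_mem.mpr hrm
      rw [this, zero_mul]
    have : ρ (v y) = 0 := by
      conv_lhs => rw [← Finsupp.sum_single y]
      rw [map_finsuppSum, map_finsuppSum]
      refine Finset.sum_eq_zero fun i _ => ?_
      have hsingle : Finsupp.single i (y i) = y i • Finsupp.single i (1 : A) := by
        rw [Finsupp.smul_single, smul_eq_mul, mul_one]
      change ρ (v (Finsupp.single i (y i))) = 0
      rw [hsingle, map_smul]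
      exact hz _ _
    rw [hy] at this
    have hK : Nontrivial K := Ideal.Quotient.nontrivial_iff.mpr
      (IsLocalRing.maximalIdeal.isMaximal R).ne_top
    exact one_ne_zero this
  obtain ⟨w, hw⟩ := hi.exists_left_inv
  let s : QWitt p n R →ₗ[A] A := w • (Finsupp.lapply i ∘ₗ u)
  have hs1 : s 1 = 1 := hw
  refine isNQuasiFSplit_iff.mpr ⟨s.toAddMonoidHom.comp
    (Ideal.Quotient.mk _ : WittVector p R →+* QWitt p n R).toAddMonoidHom, ?_, ?_, ?_⟩
  · intro x hx
    change s (Ideal.Quotient.mk _ x) = 0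
    rw [Ideal.Quotient.eq_zero_iff_mem.mpr (Ideal.mem_sup_left hx), map_zero]
  · intro a x
    change s (Ideal.Quotient.mk _ (_ * x)) = _ * s (Ideal.Quotient.mk _ x)
    rw [map_mul]
    exact s.map_smul (Ideal.Quotient.mk _ a : A) (Ideal.Quotient.mk _ x : QWitt p n R)
  · exact hs1

/-! ### Ascent to the completion -/

lemma evalₐ_eq_mk_of_le {R : Type*} [CommRing R] {m : Ideal R} {M N : ℕ} (hMN : M ≤ N)
    {t : AdicCompletion m R} {r : R}
    (h : AdicCompletion.evalₐ m N t = Ideal.Quotient.mk _ r) :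
    AdicCompletion.evalₐ m M t = Ideal.Quotient.mk _ r := by
  have key : ∀ x : AdicCompletion m R, AdicCompletion.evalₐ m M x =
      Ideal.Quotient.factor (Ideal.pow_le_pow_right hMN) (AdicCompletion.evalₐ m N x) := by
    intro x
    induction x using AdicCompletion.induction_on with
    | _ x =>
      rw [AdicCompletion.evalₐ_mk, AdicCompletion.evalₐ_mk, Ideal.Quotient.factor_mk]
      refine Ideal.Quotient.eq.mpr ?_
      have := SModEq.sub_mem.mp (x.property hMN)
      rwa [smul_eq_mul, Ideal.mul_top] at this
  rw [key, h, Ideal.Quotient.factor_mk]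

open scoped TensorProduct in
lemma isNQuasiFSplit_completion {R : Type*} [CommRing R] [IsNoetherianRing R] (m : Ideal R)
    (n : ℕ) (h : IsNQuasiFSplit p R n) : IsNQuasiFSplit p (AdicCompletion m R) n := by
  obtain ⟨τ, h1, h2, h3⟩ := isNQuasiFSplit_iff.mp h
  let T := AdicCompletion m R
  let A := R ⧸ Ideal.span {(p : R)}
  let ev (N : ℕ) : T →+* R ⧸ m ^ N := (AdicCompletion.evalₐ m N).toRingHom
  let qt (N : ℕ) : R →+* R ⧸ m ^ N := Ideal.Quotient.mk (m ^ N)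
  have hcont : ∀ k, ∃ M, k ≤ M ∧ ∀ x y : WittVector p R,
      WittVector.map (qt M) x = WittVector.map (qt M) y →
      τ x - τ y ∈ (m ^ k • ⊤ : Submodule R A) := by
    intro k
    obtain ⟨M, hM⟩ := exists_ker_map_le (IsNoetherian.noetherian m) n k
      ((m ^ k • ⊤ : Submodule R A).toAddSubgroup.comap τ)
      (fun x hx => by
        change τ x ∈ (m ^ k • ⊤ : Submodule R A)
        rw [h1 x hx]; exact zero_mem _)
      (fun a ha x => by
        change τ _ ∈ (m ^ k • ⊤ : Submodule R A)
        rw [h2]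
        exact Submodule.smul_mem_smul ha trivial)
    refine ⟨max k M, le_max_left _ _, fun x y hxy => ?_⟩
    rw [← map_sub]
    refine hM _ (mem_ker_map_iff.mpr fun j => ?_)
    have : x - y ∈ RingHom.ker (WittVector.map (qt (max k M))) := by
      rw [RingHom.mem_ker, map_sub, hxy, sub_self]
    exact Ideal.pow_le_pow_right (le_max_right _ _) (mem_ker_map_iff.mp this j)
  choose D hD hD' using hcont
  have hmono : ∀ {M N : ℕ} (_ : M ≤ N) {x : WittVector p T} {y : WittVector p R},
      WittVector.map (ev N) x = WittVector.map (qt N) y →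
      WittVector.map (ev M) x = WittVector.map (qt M) y := by
    intro M N hMN x y hxy
    ext j
    have := congrArg (fun z => z.coeff j) hxy
    simp only [map_coeff] at this ⊢
    exact evalₐ_eq_mk_of_le hMN this
  have hlift : ∀ (N : ℕ) (x : WittVector p T), ∃ y : WittVector p R,
      WittVector.map (ev N) x = WittVector.map (qt N) y := by
    intro N x
    obtain ⟨y, hy⟩ := WittVector.map_surjective (p := p) (qt N) Ideal.Quotient.mk_surjective
      (WittVector.map (ev N) x)
    exact ⟨y, hy.symm⟩
  -- `l N x` approximates `x` modulo `m^N`; the extension `Z` of `τ` takes at level `k` the value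
  -- of `τ` on an approximation of precision `D k`, and `hz` shows any finer one gives the same.
  choose l hl using hlift
  let mkA (k : ℕ) : A →ₗ[R] A ⧸ (m ^ k • ⊤ : Submodule R A) := Submodule.mkQ _
  let z (x : WittVector p T) (k : ℕ) : A ⧸ (m ^ k • ⊤ : Submodule R A) := mkA k (τ (l (D k) x))
  have hz : ∀ (x : WittVector p T) (k N : ℕ) (y : WittVector p R), D k ≤ N →
      WittVector.map (ev N) x = WittVector.map (qt N) y → z x k = mkA k (τ y) := by
    intro x k N y hN hy
    refine (Submodule.Quotient.eq _).mpr (hD' k _ _ ?_)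
    rw [← hl, hmono hN hy]
  let Z (x : WittVector p T) : AdicCompletion m A := ⟨z x, by
    intro j k hjk
    let N := max (D j) (D k)
    rw [hz x j N _ (le_max_left _ _) (hl N x), hz x k N _ (le_max_right _ _) (hl N x)]
    rfl⟩
  have hZ : ∀ x k, (Z x).val k = z x k := fun _ _ => rfl
  have hZadd : ∀ x y, Z (x + y) = Z x + Z y := by
    intro x y
    refine AdicCompletion.ext fun k => ?_
    change z (x + y) k = z x k + z y k
    rw [hz (x + y) k (D k) (l (D k) x + l (D k) y) le_rfl (by rw [map_add, map_add, hl, hl]),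
      map_add, map_add]
  have hZ0 : ∀ x ∈ RingHom.ker (truncate (p := p) (R := T) n), Z x = 0 := by
    intro x hx
    rw [mem_ker_truncate] at hx
    refine AdicCompletion.ext fun k => ?_
    -- An approximation of `x` that itself lies in `Fil_n`.
    let y : WittVector p R := WittVector.mk p fun j => if j < n then 0 else (l (D k) x).coeff j
    have hy : y ∈ RingHom.ker (truncate (p := p) (R := R) n) := by
      rw [mem_ker_truncate]
      intro i hi
      simp [y, coeff_mk, hi]
    change z x k = 0
    rw [hz x k (D k) y le_rfl ?_, h1 y hy, map_zero]
    ext j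
    simp only [map_coeff, y, coeff_mk]
    split_ifs with hj
    · rw [hx j hj, map_zero, map_zero]
    · have := congrArg (fun z => z.coeff j) (hl (D k) x)
      simpa only [map_coeff] using this
  have hZmul : ∀ (a : T) x, Z (teichmuller p (a ^ p) * x) = a • Z x := by
    intro a x
    refine AdicCompletion.ext fun k => ?_
    obtain ⟨r, hr⟩ := Ideal.Quotient.mk_surjective (ev (D k) a)
    rw [AdicCompletion.smul_eval, AdicCompletion.val_smul_eq_evalₐ_smul,
      evalₐ_eq_mk_of_le (hD k) hr.symm]
    change z _ k = _ • z x k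
    rw [hz _ k (D k) (teichmuller p (r ^ p) * l (D k) x) le_rfl (by
      rw [map_mul, map_mul, hl (D k) x, map_teichmuller, map_teichmuller, map_pow (ev (D k)),
        map_pow (qt (D k)), ← hr]), h2]
    rfl
  have hZ1 : Z 1 = AdicCompletion.of m A 1 := by
    refine AdicCompletion.ext fun k => ?_
    change z 1 k = mkA k 1
    rw [hz 1 k (D k) 1 le_rfl (by rw [map_one, map_one]), h3]
  let ψ : T ⊗[R] A →ₐ[T] T ⧸ Ideal.span {(p : T)} := Algebra.TensorProduct.lift
    (Algebra.ofId T _)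
    (Ideal.Quotient.liftₐ (Ideal.span {(p : R)}) (Algebra.ofId R _) (by
      intro a ha
      obtain ⟨c, rfl⟩ := Ideal.mem_span_singleton.mp ha
      rw [map_mul, map_natCast]
      have : (p : T ⧸ Ideal.span {(p : T)}) = 0 := by
        rw [← map_natCast (Ideal.Quotient.mk (Ideal.span {(p : T)})) p]
        exact Ideal.Quotient.eq_zero_iff_mem.mpr (Ideal.mem_span_singleton_self _)
      rw [this, zero_mul])) (fun _ _ => Commute.all _ _)
  let E := (AdicCompletion.ofTensorProductEquivOfFiniteNoetherian m A).symm
  have hE1 : E (AdicCompletion.of m A 1) = 1 ⊗ₜ 1 := by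
    rw [LinearEquiv.symm_apply_eq, AdicCompletion.ofTensorProductEquivOfFiniteNoetherian_apply,
      AdicCompletion.ofTensorProduct_tmul, one_smul]
  refine isNQuasiFSplit_iff.mpr ⟨AddMonoidHom.mk' (fun x => ψ (E (Z x))) (fun x y => by
    rw [hZadd, map_add, map_add]), fun x hx => ?_, fun a x => ?_, ?_⟩
  · change ψ (E (Z x)) = 0
    rw [hZ0 x hx, map_zero, map_zero]
  · change ψ (E (Z _)) = _ * ψ (E (Z x))
    rw [hZmul, map_smul, map_smul, Algebra.smul_def]
    rfl
  · change ψ (E (Z 1)) = 1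
    rw [hZ1, hE1]
    exact map_one ψ

end Split

/-- Let `p` be a prime and `(R, m)` a Noetherian local
`ℤ_(p)`-algebra with `p ∈ m`, such that `p` is a nonzerodivisor on `R` and `R/pR` is
`F`-finite.  Let `R̂` be the `m`-adic completion of `R`.  Then for every `n ≥ 1`, `R`
is `n`-quasi-`F`-split iff `R̂` is `n`-quasi-`F`-split; in particular
`sht(R) = sht(R̂)`. -/
theorem quasiFSplit_iff_completion (p : ℕ) [Fact p.Prime]
    (R : Type*) [CommRing R] [IsNoetherianRing R] [IsLocalRing R]
    (hZp : ∀ m : ℤ, ¬ (p : ℤ) ∣ m → IsUnit (m : R))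
    (hpm : (p : R) ∈ IsLocalRing.maximalIdeal R)
    (hR : (p : R) ∈ nonZeroDivisors R)
    (F : R ⧸ Ideal.span {(p : R)} →+* R ⧸ Ideal.span {(p : R)})
    (hF : ∀ x : R ⧸ Ideal.span {(p : R)}, F x = x ^ p) (hFfin : F.Finite) :
    (∀ n : ℕ, 1 ≤ n →
      (IsNQuasiFSplit p R n ↔
        IsNQuasiFSplit p (AdicCompletion (IsLocalRing.maximalIdeal R) R) n)) ∧
    sht p R = sht p (AdicCompletion (IsLocalRing.maximalIdeal R) R) := by
  have key : ∀ n : ℕ, IsNQuasiFSplit p R n ↔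
      IsNQuasiFSplit p (AdicCompletion (IsLocalRing.maximalIdeal R) R) n := fun n =>
    ⟨isNQuasiFSplit_completion _ n,
      isNQuasiFSplit_of_completion hpm n (phiQ_finite F hF hFfin n)⟩
  refine ⟨fun n _ => key n, ?_⟩
  simp only [sht, key]
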